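/- For every MSO sentence φ over (Σ,Γ)-labeled graphs and every k > 0, there exists an MSO sentence φ~^k over Λ^k-labeled binary trees such that for every valid k-STT τ with ⟦τ⟧ = (G,χ): G ⊨ φ if and only if τ ⊨ φ~^k. -/

import Mathlib

/-! ### Monadic second-order logic over vertex- and edge-labeled structures -/

/-- MSO formulas over structures with vertex labels `Vl` and binary relations
indexed by `El`.  First-order variables and set variables are indexed by `ℕ`. -/
inductive GMSO (Vl El : Type) : Type
  | lab (a : Vl) (x : ℕ)
  | edge (γ : El) (x y : ℕ)
  | eq (x y : ℕ)
  | mem (x X : ℕ)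
  | or (φ ψ : GMSO Vl El)
  | not (φ : GMSO Vl El)
  | exFO (x : ℕ) (φ : GMSO Vl El)
  | exSO (X : ℕ) (φ : GMSO Vl El)

namespace GMSO

variable {Vl El : Type} {V : Type}

/-- Satisfaction of an MSO formula in a structure with domain `dom`, labeling
relation `lab` and edge relations `edge`, under valuations `ν` (first-order,
partial) and `μ` (second-order). -/
def Sat (dom : Set V) (lab : V → Vl → Prop) (edge : El → V → V → Prop) :
    (ℕ → Option V) → (ℕ → Set V) → GMSO Vl El → Prop
  | ν, _, .lab a x => ∃ v, ν x = some v ∧ v ∈ dom ∧ lab v a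
  | ν, _, .edge γ x y => ∃ u v, ν x = some u ∧ ν y = some v ∧ edge γ u v
  | ν, _, .eq x y => ∃ v, ν x = some v ∧ ν y = some v
  | ν, μ, .mem x X => ∃ v, ν x = some v ∧ v ∈ μ X
  | ν, μ, .or φ ψ => Sat dom lab edge ν μ φ ∨ Sat dom lab edge ν μ ψ
  | ν, μ, .not φ => ¬ Sat dom lab edge ν μ φ
  | ν, μ, .exFO x φ => ∃ v ∈ dom, Sat dom lab edge (Function.update ν x (some v)) μ φ
  | ν, μ, .exSO X φ => ∃ E : Set V, E ⊆ dom ∧ Sat dom lab edge ν (Function.update μ X E) φ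

/-- Free first-order variables. -/
def freeFO : GMSO Vl El → Set ℕ
  | .lab _ x => {x}
  | .edge _ x y => {x, y}
  | .eq x y => {x, y}
  | .mem x _ => {x}
  | .or φ ψ => freeFO φ ∪ freeFO ψ
  | .not φ => freeFO φ
  | .exFO x φ => freeFO φ \ {x}
  | .exSO _ φ => freeFO φ

/-- Free second-order variables. -/
def freeSO : GMSO Vl El → Set ℕ
  | .lab _ _ => ∅
  | .edge _ _ _ => ∅
  | .eq _ _ => ∅
  | .mem _ X => {X}
  | .or φ ψ => freeSO φ ∪ freeSO ψ
  | .not φ => freeSO φ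
  | .exFO _ φ => freeSO φ
  | .exSO X φ => freeSO φ \ {X}

/-- A sentence is a formula without free variables. -/
def Closed (φ : GMSO Vl El) : Prop := freeFO φ = ∅ ∧ freeSO φ = ∅

/-- Satisfaction of a sentence (valuations are irrelevant for sentences). -/
def Models (dom : Set V) (lab : V → Vl → Prop) (edge : El → V → V → Prop)
    (φ : GMSO Vl El) : Prop :=
  Sat dom lab edge (fun _ => none) (fun _ => ∅) φ

/-- First-order formulas: no second-order quantification. -/
def FirstOrder : GMSO Vl El → Prop
  | .or φ ψ => FirstOrder φ ∧ FirstOrder ψ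
  | .not φ => FirstOrder φ
  | .exFO _ φ => FirstOrder φ
  | .exSO _ _ => False
  | _ => True

/-- EMSO formulas: a block of existential second-order quantifiers followed by a
first-order formula. -/
inductive IsEMSO : GMSO Vl El → Prop
  | fo {φ : GMSO Vl El} : FirstOrder φ → IsEMSO φ
  | ex {X : ℕ} {φ : GMSO Vl El} : IsEMSO φ → IsEMSO (.exSO X φ)

end GMSO
/-! ### Labeled binary trees (with unary nodes) and MSO over them -/

/-- Λ-labeled trees in which every node has 0, 1, or 2 children. -/
inductive BTree (Λ : Type) : Type
  | leaf (l : Λ)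
  | unary (l : Λ) (t : BTree Λ)
  | binary (l : Λ) (t₁ t₂ : BTree Λ)

namespace BTree

variable {Λ : Type}

/-- The label at a position (a path from the root; `false` = child 0,
`true` = child 1), if the position exists. -/
def labelAt : BTree Λ → List Bool → Option Λ
  | .leaf l, [] => some l
  | .unary l _, [] => some l
  | .binary l _ _, [] => some l
  | .unary _ t, false :: p => t.labelAt p
  | .binary _ t₁ _, false :: p => t₁.labelAt p
  | .binary _ _ t₂, true :: p => t₂.labelAt p
  | _, _ => none

/-- The set of node positions of a tree. -/
def positions (t : BTree Λ) : Set (List Bool) := {p | (t.labelAt p).isSome}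

/-- The `b`-child relation (`b = false`: child 0, `b = true`: child 1). -/
def childRel (t : BTree Λ) (b : Bool) (p q : List Bool) : Prop :=
  q = p ++ [b] ∧ q ∈ t.positions

/-- Satisfaction of an MSO sentence over the tree (atoms: labels, `↓0`, `↓1`). -/
def TSat (t : BTree Λ) (φ : GMSO Λ Bool) : Prop :=
  GMSO.Models t.positions (fun p l => t.labelAt p = some l) t.childRel φ

end BTree
/-! ### Special tree terms (STTs) and their graph semantics -/

/-- Special tree terms over vertex labels `Vl` and edge labels `El`,
with colors in `ℕ`. -/
inductive STT (Vl El : Type) : Type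
  | atom (i : ℕ) (a : Vl)
  | add (γ : El) (i j : ℕ) (τ : STT Vl El)
  | forget (i : ℕ) (τ : STT Vl El)
  | plus (τ₁ τ₂ : STT Vl El)

namespace STT

variable {Vl El : Type}

/-- The active colors of a term. -/
def activeColors : STT Vl El → Set ℕ
  | .atom i _ => {i}
  | .add _ _ _ τ => τ.activeColors
  | .forget i τ => τ.activeColors \ {i}
  | .plus τ₁ τ₂ => τ₁.activeColors ∪ τ₂.activeColors

/-- Valid `k`-STTs: colors in `[k] = {1,…,k}`, and the two arguments of `⊕`
have disjoint sets of active colors. -/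
def Valid (k : ℕ) : STT Vl El → Prop
  | .atom i _ => 1 ≤ i ∧ i ≤ k
  | .add _ i j τ => 1 ≤ i ∧ i ≤ k ∧ 1 ≤ j ∧ j ≤ k ∧ τ.Valid k
  | .forget i τ => 1 ≤ i ∧ i ≤ k ∧ τ.Valid k
  | .plus τ₁ τ₂ => τ₁.Valid k ∧ τ₂.Valid k ∧ Disjoint τ₁.activeColors τ₂.activeColors

/-- The (partial, injective) coloring `χ_τ`, mapping a color to the position of
the vertex currently carrying it.  Vertices are identified with the positions
of the atoms in the term (`false` = unique/left child, `true` = right child). -/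
def chi : STT Vl El → ℕ → Option (List Bool)
  | .atom i _, j => if j = i then some [] else none
  | .add _ _ _ τ, j => (τ.chi j).map (false :: ·)
  | .forget i τ, j => if j = i then none else (τ.chi j).map (false :: ·)
  | .plus τ₁ τ₂, j =>
      match τ₁.chi j with
      | some p => some (false :: p)
      | none => (τ₂.chi j).map (true :: ·)

/-- The label of a vertex (i.e., of an atom position) of `G_τ`. -/
def vlabel : STT Vl El → List Bool → Option Vl
  | .atom _ a, [] => some a
  | .add _ _ _ τ, false :: p => τ.vlabel p
  | .forget _ τ, false :: p => τ.vlabel p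
  | .plus τ₁ _, false :: p => τ₁.vlabel p
  | .plus _ τ₂, true :: p => τ₂.vlabel p
  | _, _ => none

/-- The vertex set of `G_τ`. -/
def vertices (τ : STT Vl El) : Set (List Bool) := {p | (τ.vlabel p).isSome}

/-- The `γ`-labeled edge relation of `G_τ`. -/
def edgeRel : STT Vl El → El → List Bool → List Bool → Prop
  | .atom _ _, _, _, _ => False
  | .add γ' i j τ, γ, u, v =>
      (∃ u' v', u = false :: u' ∧ v = false :: v' ∧ τ.edgeRel γ u' v') ∨
      (γ = γ' ∧ ∃ pu pv, τ.chi i = some pu ∧ τ.chi j = some pv ∧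
        u = false :: pu ∧ v = false :: pv)
  | .forget _ τ, γ, u, v => ∃ u' v', u = false :: u' ∧ v = false :: v' ∧ τ.edgeRel γ u' v'
  | .plus τ₁ τ₂, γ, u, v =>
      (∃ u' v', u = false :: u' ∧ v = false :: v' ∧ τ₁.edgeRel γ u' v') ∨
      (∃ u' v', u = true :: u' ∧ v = true :: v' ∧ τ₂.edgeRel γ u' v')

/-- `G_τ` is acyclic: the union of all edge relations has an irreflexive
transitive closure. -/
def Acyclic (τ : STT Vl El) : Prop :=
  ∀ p, ¬ Relation.TransGen (fun u v => ∃ γ, τ.edgeRel γ u v) p p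

/-- Satisfaction of a graph-MSO sentence in the graph `G_τ`. -/
def graphSat (τ : STT Vl El) (φ : GMSO Vl El) : Prop :=
  GMSO.Models τ.vertices (fun p a => τ.vlabel p = some a) τ.edgeRel φ

end STT

/-- The label alphabet `Λ^k` of `k`-STTs, seen as labeled binary trees. -/
inductive STTLabel (Vl El : Type) : Type
  | atom (i : ℕ) (a : Vl)
  | add (γ : El) (i j : ℕ)
  | forget (i : ℕ)
  | plus

/-- The binary tree underlying a special tree term. -/
def STT.toTree {Vl El : Type} : STT Vl El → BTree (STTLabel Vl El)
  | .atom i a => .leaf (.atom i a)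
  | .add γ i j τ => .unary (.add γ i j) τ.toTree
  | .forget i τ => .unary (.forget i) τ.toTree
  | .plus τ₁ τ₂ => .binary .plus τ₁.toTree τ₂.toTree

/-!
A graph sentence is pulled back along an MSO interpretation of `G_τ` in the tree of `τ`. Vertices
are the nodes labeled `(i, a)`. There is a `γ`-edge from `u` to `v` exactly when, for some node `z`
labeled `Add^γ_{i,j}`, the vertex `u` has color `i` and `v` has color `j` in the subterm at `z`; and
`u` has color `i` in that subterm exactly when `u` is labeled `(i, a)`, lies below `z`, and no node
on the path from `z` to `u` is labeled `Forget_i`. The latter is reachability along a definable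
relation, which MSO expresses by quantifying over the sets closed under that relation.
-/

namespace GMSO

section Connectives

variable {L M V ι : Type}

/-- Conjunction, which is not a primitive connective of `GMSO`. -/
protected def and (φ ψ : GMSO L M) : GMSO L M := .not (.or (.not φ) (.not ψ))

/-- The disjunction of the formulas `f i`, `i ∈ l`; the empty one is an unsatisfiable sentence. -/
def disj (f : ι → GMSO L M) : List ι → GMSO L M
  | [] => .exFO 0 (.not (.eq 0 0))
  | i :: l => .or (f i) (disj f l)

/-- The set variable `0` is closed under the binary relation that `σ` defines in the first-order
variables `1` and `2`, which the formula binds. -/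
def closedUnder (σ : GMSO L M) : GMSO L M :=
  .not (.exFO 1 (.exFO 2 ((GMSO.mem 1 0).and (σ.and (.not (.mem 2 0))))))

/-- The element `y` is reachable from `x` by steps along the relation that `σ` defines in the
variables `1` and `2`: no set contains `x`, omits `y` and is closed under this relation. The formula
binds the set variable `0`. -/
def reach (σ : GMSO L M) (x y : ℕ) : GMSO L M :=
  .not (.exSO 0 ((GMSO.mem x 0).and ((GMSO.mem y 0).not.and (closedUnder σ))))

@[simp] theorem freeFO_and (φ ψ : GMSO L M) : (φ.and ψ).freeFO = φ.freeFO ∪ ψ.freeFO := rfl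

@[simp] theorem freeSO_and (φ ψ : GMSO L M) : (φ.and ψ).freeSO = φ.freeSO ∪ ψ.freeSO := rfl

@[simp] theorem freeFO_disj (f : ι → GMSO L M) (l : List ι) :
    (disj f l).freeFO = ⋃ i ∈ l, (f i).freeFO := by
  induction l with
  | nil => simp [disj, freeFO]
  | cons i l ih => simp [disj, freeFO, ih, Set.iUnion_or, Set.iUnion_union_distrib]

@[simp] theorem freeSO_disj (f : ι → GMSO L M) (l : List ι) :
    (disj f l).freeSO = ⋃ i ∈ l, (f i).freeSO := by
  induction l with
  | nil => simp [disj, freeSO]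
  | cons i l ih => simp [disj, freeSO, ih, Set.iUnion_or, Set.iUnion_union_distrib]

theorem freeFO_reach_subset {σ : GMSO L M} (hσ : σ.freeFO ⊆ {1, 2}) (x y : ℕ) :
    (reach σ x y).freeFO ⊆ {x, y} := by
  intro n hn
  have := @hσ n
  simp only [reach, closedUnder, freeFO, freeFO_and, Set.mem_union, Set.mem_sdiff,
    Set.mem_singleton_iff, Set.mem_insert_iff] at hn this ⊢
  tauto

theorem freeSO_reach {σ : GMSO L M} (hσ : σ.freeSO = ∅) (x y : ℕ) : (reach σ x y).freeSO = ∅ := by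
  simp [reach, closedUnder, freeSO, hσ]

variable {dom : Set V} {lab : V → L → Prop} {edge : M → V → V → Prop}
  {ν : ℕ → Option V} {μ : ℕ → Set V}

@[simp] theorem sat_and {φ ψ : GMSO L M} :
    Sat dom lab edge ν μ (φ.and ψ) ↔ Sat dom lab edge ν μ φ ∧ Sat dom lab edge ν μ ψ := by
  simp only [GMSO.and, Sat]
  tauto

@[simp] theorem sat_disj {f : ι → GMSO L M} {l : List ι} :
    Sat dom lab edge ν μ (disj f l) ↔ ∃ i ∈ l, Sat dom lab edge ν μ (f i) := by
  induction l with
  | nil => simp [disj, Sat]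
  | cons i l ih => simp [disj, Sat, ih]

theorem sat_closedUnder {σ : GMSO L M} {r : V → V → Prop}
    (hσ : ∀ u ∈ dom, ∀ v ∈ dom,
      (Sat dom lab edge (Function.update (Function.update ν 1 (some u)) 2 (some v)) μ σ ↔ r u v)) :
    Sat dom lab edge ν μ (closedUnder σ) ↔
      ∀ u ∈ dom, ∀ v ∈ dom, u ∈ μ 0 → r u v → v ∈ μ 0 := by
  simp only [closedUnder, Sat, sat_and]
  constructor
  · intro h u hu v hv huX huv
    by_contra hvX
    exact h ⟨u, hu, v, hv, ⟨u, by simp, huX⟩, (hσ u hu v hv).2 huv, by simpa using hvX⟩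
  · rintro h ⟨u, hu, v, hv, huX, huv, hvX⟩
    simp only [ne_eq, OfNat.one_ne_ofNat, not_false_eq_true, Function.update_of_ne,
      Function.update_self, Option.some.injEq, exists_eq_left'] at huX hvX
    exact hvX (h u hu v hv huX ((hσ u hu v hv).1 huv))

theorem sat_reach {σ : GMSO L M} {r : V → V → Prop} {x y : ℕ} {p q : V}
    (hσ : ∀ μ, ∀ u ∈ dom, ∀ v ∈ dom,
      (Sat dom lab edge (Function.update (Function.update ν 1 (some u)) 2 (some v)) μ σ ↔ r u v))
    (hr : ∀ u v, r u v → v ∈ dom) (hx : ν x = some p) (hy : ν y = some q) (hp : p ∈ dom) :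
    Sat dom lab edge ν μ (reach σ x y) ↔ Relation.ReflTransGen r p q := by
  simp only [reach, Sat, sat_and, hx, hy, Option.some.injEq, exists_eq_left',
    sat_closedUnder (hσ _), Function.update_self]
  constructor
  · intro h
    by_contra hpq
    refine h ⟨{w ∈ dom | Relation.ReflTransGen r p w}, Set.sep_subset _ _, ⟨hp, .refl⟩,
      fun hq => hpq hq.2, ?_⟩
    rintro u - v hv ⟨-, hpu⟩ huv
    exact ⟨hv, hpu.tail huv⟩
  · rintro hpq ⟨E, hE, hpE, hqE, hclosed⟩
    refine hqE ?_
    clear hy hqE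
    induction hpq with
    | refl => exact hpE
    | tail _ huv ih => exact hclosed _ (hE ih) _ (hr _ _ huv) ih huv

end Connectives

/-! ### MSO interpretations -/

/-- A one-dimensional MSO interpretation of `(Vl, El)`-labeled structures in `(L, M)`-labeled ones:
`vert x`, `lab a x` and `edge γ x y` define the domain, the labels and the edges of the interpreted
structure. These formulas may bind any variable below `reserved`, so the translation of a formula
renames each variable `x` to `x + reserved`. -/
structure Interpretation (Vl El L M : Type) where
  reserved : ℕ
  vert : ℕ → GMSO L M
  lab : Vl → ℕ → GMSO L M
  edge : El → ℕ → ℕ → GMSO L M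
  freeFO_vert : ∀ x, (vert x).freeFO ⊆ {x}
  freeSO_vert : ∀ x, (vert x).freeSO = ∅
  freeFO_lab : ∀ a x, (lab a x).freeFO ⊆ {x}
  freeSO_lab : ∀ a x, (lab a x).freeSO = ∅
  freeFO_edge : ∀ γ x y, (edge γ x y).freeFO ⊆ {x, y}
  freeSO_edge : ∀ γ x y, (edge γ x y).freeSO = ∅

namespace Interpretation

variable {Vl El L M V : Type} (I : Interpretation Vl El L M)

/-- The pullback of a formula along an interpretation: atoms are replaced by their definitions and
first-order quantifiers are relativized to `vert`. Set quantifiers need no relativization, since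
only the trace of a set on the interpreted domain matters. -/
def translate : GMSO Vl El → GMSO L M
  | .lab a x => I.lab a (x + I.reserved)
  | .edge γ x y => I.edge γ (x + I.reserved) (y + I.reserved)
  | .eq x y => .eq (x + I.reserved) (y + I.reserved)
  | .mem x X => .mem (x + I.reserved) (X + I.reserved)
  | .or φ ψ => .or (translate φ) (translate ψ)
  | .not φ => .not (translate φ)
  | .exFO x φ => .exFO (x + I.reserved) ((I.vert (x + I.reserved)).and (translate φ))
  | .exSO X φ => .exSO (X + I.reserved) (translate φ)

theorem freeFO_translate_subset (φ : GMSO Vl El) :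
    (I.translate φ).freeFO ⊆ (· + I.reserved) '' φ.freeFO := by
  induction φ with
  | lab a x => simpa [translate, freeFO] using I.freeFO_lab a (x + I.reserved)
  | edge γ x y =>
    simpa [translate, freeFO, Set.image_pair] using
      I.freeFO_edge γ (x + I.reserved) (y + I.reserved)
  | eq x y => simp [translate, freeFO, Set.image_pair]
  | mem x X => simp [translate, freeFO]
  | or φ ψ ihφ ihψ =>
    simpa only [translate, freeFO, Set.image_union] using Set.union_subset_union ihφ ihψ
  | not _ ih => exact ih
  | exFO x φ ih =>
    rintro n ⟨hvert | hφ, hne⟩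
    · exact absurd (I.freeFO_vert _ hvert) hne
    · obtain ⟨m, hm, rfl⟩ := ih hφ
      exact ⟨m, ⟨hm, fun hmx => hne (congrArg (· + I.reserved) hmx)⟩, rfl⟩
  | exSO _ _ ih => exact ih

theorem freeSO_translate_subset (φ : GMSO Vl El) :
    (I.translate φ).freeSO ⊆ (· + I.reserved) '' φ.freeSO := by
  induction φ with
  | lab a x => simp [translate, I.freeSO_lab]
  | edge γ x y => simp [translate, I.freeSO_edge]
  | eq x y => simp [translate, freeSO]
  | mem x X => simp [translate, freeSO]
  | or φ ψ ihφ ihψ =>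
    simpa only [translate, freeSO, Set.image_union] using Set.union_subset_union ihφ ihψ
  | not _ ih => exact ih
  | exFO x φ ih => simpa [translate, freeSO, I.freeSO_vert] using ih
  | exSO X φ ih =>
    rintro n ⟨hφ, hne⟩
    obtain ⟨m, hm, rfl⟩ := ih hφ
    exact ⟨m, ⟨hm, fun hmX => hne (congrArg (· + I.reserved) hmX)⟩, rfl⟩

theorem closed_translate {φ : GMSO Vl El} (hφ : φ.Closed) : (I.translate φ).Closed :=
  ⟨by simpa [hφ.1] using I.freeFO_translate_subset φ,
    by simpa [hφ.2] using I.freeSO_translate_subset φ⟩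

/-- The structure `(dom, lab, edge)` is the one that `I` interprets in `(dom', lab', edge')`. The
formulas of `I` are only required to be correct when their free variables are not reserved. -/
structure Interprets (dom' : Set V) (lab' : V → L → Prop) (edge' : M → V → V → Prop)
    (dom : Set V) (lab : V → Vl → Prop) (edge : El → V → V → Prop) : Prop where
  subset : dom ⊆ dom'
  sat_vert : ∀ {ν μ x u}, I.reserved ≤ x → ν x = some u →
    (Sat dom' lab' edge' ν μ (I.vert x) ↔ u ∈ dom)
  sat_lab : ∀ {ν μ x u a}, I.reserved ≤ x → ν x = some u → u ∈ dom →
    (Sat dom' lab' edge' ν μ (I.lab a x) ↔ lab u a)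
  sat_edge : ∀ {ν μ x y u v γ}, I.reserved ≤ x → I.reserved ≤ y → ν x = some u → ν y = some v →
    u ∈ dom → v ∈ dom → (Sat dom' lab' edge' ν μ (I.edge γ x y) ↔ edge γ u v)

/-- The first-order valuation `ν` is total on `S` with values in `dom`, and `ν'` agrees with it up
to the renaming of variables. -/
def FOMatch (dom : Set V) (S : Set ℕ) (ν ν' : ℕ → Option V) : Prop :=
  ∀ x ∈ S, ∃ u ∈ dom, ν x = some u ∧ ν' (x + I.reserved) = some u

/-- On `S`, the set valuation `μ` is the trace of `μ'` on `dom` up to the renaming of variables. -/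
def SOMatch (dom : Set V) (S : Set ℕ) (μ μ' : ℕ → Set V) : Prop :=
  ∀ X ∈ S, μ X = μ' (X + I.reserved) ∩ dom

variable {I} {dom : Set V} {S T : Set ℕ} {ν ν' : ℕ → Option V} {μ μ' : ℕ → Set V}

theorem FOMatch.mono (h : I.FOMatch dom T ν ν') (hST : S ⊆ T) : I.FOMatch dom S ν ν' :=
  fun x hx => h x (hST hx)

theorem SOMatch.mono (h : I.SOMatch dom T μ μ') (hST : S ⊆ T) : I.SOMatch dom S μ μ' :=
  fun X hX => h X (hST hX)

theorem FOMatch.update {x : ℕ} (h : I.FOMatch dom (S \ {x}) ν ν') {u : V} (hu : u ∈ dom) :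
    I.FOMatch dom S (Function.update ν x (some u))
      (Function.update ν' (x + I.reserved) (some u)) := by
  intro y hy
  by_cases hyx : y = x
  · exact ⟨u, hu, by simp [hyx]⟩
  · simpa [hyx] using h y ⟨hy, hyx⟩

theorem SOMatch.update {X : ℕ} (h : I.SOMatch dom (S \ {X}) μ μ') (E : Set V) :
    I.SOMatch dom S (Function.update μ X (E ∩ dom))
      (Function.update μ' (X + I.reserved) E) := by
  intro Y hY
  by_cases hYX : Y = X
  · simp [hYX]
  · simpa [hYX] using h Y ⟨hY, hYX⟩

variable {dom' : Set V} {lab' : V → L → Prop} {edge' : M → V → V → Prop}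
  {lab : V → Vl → Prop} {edge : El → V → V → Prop}

theorem Interprets.sat_translate (h : I.Interprets dom' lab' edge' dom lab edge)
    {φ : GMSO Vl El} (hν : I.FOMatch dom φ.freeFO ν ν') (hμ : I.SOMatch dom φ.freeSO μ μ') :
    Sat dom' lab' edge' ν' μ' (I.translate φ) ↔ Sat dom lab edge ν μ φ := by
  induction φ generalizing ν ν' μ μ' with
  | lab a x =>
    obtain ⟨u, hu, hνx, hνx'⟩ := hν x rfl
    simpa [translate, Sat, hνx, hu] using h.sat_lab (Nat.le_add_left _ _) hνx' hu
  | edge γ x y =>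
    obtain ⟨u, hu, hνx, hνx'⟩ := hν x (by simp [freeFO])
    obtain ⟨v, hv, hνy, hνy'⟩ := hν y (by simp [freeFO])
    simpa [translate, Sat, hνx, hνy] using
      h.sat_edge (Nat.le_add_left _ _) (Nat.le_add_left _ _) hνx' hνy' hu hv
  | eq x y =>
    obtain ⟨u, -, hνx, hνx'⟩ := hν x (by simp [freeFO])
    obtain ⟨v, -, hνy, hνy'⟩ := hν y (by simp [freeFO])
    simp [translate, Sat, hνx, hνx', hνy, hνy']
  | mem x X =>
    obtain ⟨u, hu, hνx, hνx'⟩ := hν x rfl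
    simp [translate, Sat, hνx, hνx', hμ X rfl, hu]
  | or φ ψ ihφ ihψ =>
    exact or_congr (ihφ (hν.mono Set.subset_union_left) (hμ.mono Set.subset_union_left))
      (ihψ (hν.mono Set.subset_union_right) (hμ.mono Set.subset_union_right))
  | not φ ih => exact not_congr (ih hν hμ)
  | exFO x φ ih =>
    simp only [translate, Sat, sat_and, h.sat_vert (Nat.le_add_left _ _) (Function.update_self ..)]
    constructor
    · rintro ⟨u, -, hu, hφ⟩
      exact ⟨u, hu, (ih (hν.update hu) hμ).1 hφ⟩
    · rintro ⟨u, hu, hφ⟩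
      exact ⟨u, h.subset hu, hu, (ih (hν.update hu) hμ).2 hφ⟩
  | exSO X φ ih =>
    constructor
    · rintro ⟨E, -, hφ⟩
      exact ⟨E ∩ dom, Set.inter_subset_right, (ih hν (hμ.update E)).1 hφ⟩
    · rintro ⟨E, hE, hφ⟩
      rw [← Set.inter_eq_left.2 hE] at hφ
      exact ⟨E, hE.trans h.subset, (ih hν (hμ.update E)).2 hφ⟩

theorem Interprets.models_translate (h : I.Interprets dom' lab' edge' dom lab edge)
    {φ : GMSO Vl El} (hφ : φ.Closed) :
    Models dom' lab' edge' (I.translate φ) ↔ Models dom lab edge φ :=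
  h.sat_translate (by simp [FOMatch, hφ.1]) (by simp [SOMatch, hφ.2])

end Interpretation

end GMSO

/-! ### Colors and edges read off the tree of a term -/

namespace BTree

variable {Λ : Type} {t s : BTree Λ} {b : Bool} {p : List Bool}

/-- The tree `s` is the subtree of `t` at its child `b`. -/
def IsChild (t : BTree Λ) (b : Bool) (s : BTree Λ) : Prop :=
  ∀ p, t.labelAt (b :: p) = s.labelAt p

theorem isChild_unary (l : Λ) (t : BTree Λ) : IsChild (.unary l t) false t := fun _ => rfl

theorem isChild_binary_false (l : Λ) (t₁ t₂ : BTree Λ) : IsChild (.binary l t₁ t₂) false t₁ :=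
  fun _ => rfl

theorem isChild_binary_true (l : Λ) (t₁ t₂ : BTree Λ) : IsChild (.binary l t₁ t₂) true t₂ :=
  fun _ => rfl

theorem mem_positions_of_labelAt_eq_some {l : Λ} (h : t.labelAt p = some l) : p ∈ t.positions := by
  simp [positions, h]

theorem nil_mem_positions (t : BTree Λ) : [] ∈ t.positions := by
  cases t <;> rfl

theorem IsChild.cons_mem_positions (h : t.IsChild b s) :
    b :: p ∈ t.positions ↔ p ∈ s.positions := by
  simp [positions, h p]

/-- Satisfaction in a tree of a formula with free variables, under the valuations `ν` and `μ`. -/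
abbrev SatUnder (t : BTree Λ) (ν : ℕ → Option (List Bool)) (μ : ℕ → Set (List Bool))
    (φ : GMSO Λ Bool) : Prop :=
  GMSO.Sat t.positions (fun p l => t.labelAt p = some l) t.childRel ν μ φ

section Colors

variable {Vl El : Type} {t s : BTree (STTLabel Vl El)} {i : ℕ} {b : Bool} {γ : El}
  {p q z u v : List Bool}

/-- The step from a node `p` of the tree of a term to a child `q` of `p`, where `p` does not forget
the color `i`: a vertex colored `i` in the subterm at `q` is still so in the subterm at `p`. -/
def ColorStep (t : BTree (STTLabel Vl El)) (i : ℕ) (p q : List Bool) : Prop :=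
  t.labelAt p ≠ some (.forget i) ∧ ∃ b, t.childRel b p q

/-- The vertex `u` has color `i` in the subterm at the node `z`, that is `χ_σ i = u` for this
subterm `σ`, expressed in terms of the tree only. -/
def HasColor (t : BTree (STTLabel Vl El)) (i : ℕ) (z u : List Bool) : Prop :=
  (∃ a, t.labelAt u = some (.atom i a)) ∧ Relation.ReflTransGen (t.ColorStep i) z u

/-- The node `z` adds a `γ`-edge from `u` to `v`. -/
def AddsEdge (t : BTree (STTLabel Vl El)) (γ : El) (z u v : List Bool) : Prop :=
  ∃ i j, t.labelAt z = some (.add γ i j) ∧ t.HasColor i z u ∧ t.HasColor j z v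

theorem ColorStep.mem_positions (h : t.ColorStep i p q) : q ∈ t.positions := by
  obtain ⟨-, b, -, hq⟩ := h
  exact hq

theorem ColorStep.isPrefix (h : t.ColorStep i p q) : p <+: q := by
  obtain ⟨-, b, rfl, -⟩ := h
  exact List.prefix_append p [b]

theorem isPrefix_of_reflTransGen_colorStep (h : Relation.ReflTransGen (t.ColorStep i) p q) :
    p <+: q := by
  induction h with
  | refl => exact List.prefix_rfl
  | tail _ hstep ih => exact ih.trans hstep.isPrefix

theorem IsChild.colorStep_cons (h : t.IsChild b s) :
    t.ColorStep i (b :: p) q ↔ ∃ q', q = b :: q' ∧ s.ColorStep i p q' := by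
  constructor
  · rintro ⟨hp, c, rfl, hq⟩
    exact ⟨p ++ [c], rfl, by rwa [← h p], c, rfl, h.cons_mem_positions.1 hq⟩
  · rintro ⟨_, rfl, hp, c, rfl, hq⟩
    exact ⟨by rwa [h p], c, rfl, h.cons_mem_positions.2 hq⟩

theorem IsChild.reflTransGen_colorStep_cons (h : t.IsChild b s) :
    Relation.ReflTransGen (t.ColorStep i) (b :: p) q ↔
      ∃ q', q = b :: q' ∧ Relation.ReflTransGen (s.ColorStep i) p q' := by
  constructor
  · intro hpq
    induction hpq with
    | refl => exact ⟨p, rfl, .refl⟩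
    | tail _ hstep ih =>
      obtain ⟨r, rfl, hpr⟩ := ih
      obtain ⟨q', rfl, hrq⟩ := h.colorStep_cons.1 hstep
      exact ⟨q', rfl, hpr.tail hrq⟩
  · rintro ⟨q', rfl, hpq⟩
    exact hpq.lift (b :: ·) fun _ _ hstep => h.colorStep_cons.2 ⟨_, rfl, hstep⟩

theorem IsChild.reflTransGen_colorStep_nil_cons (h : t.IsChild b s) :
    Relation.ReflTransGen (t.ColorStep i) [] (b :: u) ↔
      t.labelAt [] ≠ some (.forget i) ∧ Relation.ReflTransGen (s.ColorStep i) [] u := by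
  constructor
  · intro hu
    obtain hnil | ⟨p, ⟨hroot, c, rfl, -⟩, hp⟩ := hu.cases_head
    · cases hnil
    · obtain rfl : c = b := by simpa using isPrefix_of_reflTransGen_colorStep hp
      obtain ⟨_, ⟨rfl⟩, hs⟩ := h.reflTransGen_colorStep_cons.1 hp
      exact ⟨hroot, hs⟩
  · rintro ⟨hroot, hs⟩
    exact .head ⟨hroot, b, rfl, h.cons_mem_positions.2 s.nil_mem_positions⟩
      (h.reflTransGen_colorStep_cons.2 ⟨u, rfl, hs⟩)

theorem hasColor_nil_nil : t.HasColor i [] [] ↔ ∃ a, t.labelAt [] = some (.atom i a) :=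
  and_iff_left .refl

theorem IsChild.hasColor_nil_cons (h : t.IsChild b s) :
    t.HasColor i [] (b :: u) ↔ t.labelAt [] ≠ some (.forget i) ∧ s.HasColor i [] u := by
  simp only [HasColor, h u, h.reflTransGen_colorStep_nil_cons]
  tauto

theorem IsChild.hasColor_cons (h : t.IsChild b s) :
    t.HasColor i (b :: z) u ↔ ∃ u', u = b :: u' ∧ s.HasColor i z u' := by
  simp only [HasColor, h.reflTransGen_colorStep_cons]
  constructor
  · rintro ⟨hlab, u', rfl, hreach⟩
    exact ⟨u', rfl, by simpa only [h u'] using hlab, hreach⟩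
  · rintro ⟨u', rfl, hlab, hreach⟩
    exact ⟨by simpa only [h u'] using hlab, u', rfl, hreach⟩

theorem IsChild.exists_addsEdge_cons (h : t.IsChild b s) :
    (∃ z, t.AddsEdge γ (b :: z) u v) ↔
      ∃ u' v', u = b :: u' ∧ v = b :: v' ∧ ∃ z, s.AddsEdge γ z u' v' := by
  simp only [AddsEdge, h _, h.hasColor_cons]
  constructor
  · rintro ⟨z, i, j, hadd, ⟨u', rfl, hu⟩, v', rfl, hv⟩
    exact ⟨u', v', rfl, rfl, z, i, j, hadd, hu, hv⟩
  · rintro ⟨u', v', rfl, rfl, z, i, j, hadd, hu, hv⟩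
    exact ⟨z, i, j, hadd, ⟨u', rfl, hu⟩, v', rfl, hv⟩

theorem exists_addsEdge_iff :
    (∃ z, t.AddsEdge γ z u v) ↔
      t.AddsEdge γ [] u v ∨ (∃ z, t.AddsEdge γ (false :: z) u v) ∨
        ∃ z, t.AddsEdge γ (true :: z) u v := by
  constructor
  · rintro ⟨_ | ⟨_ | _, z⟩, h⟩
    exacts [.inl h, .inr (.inl ⟨z, h⟩), .inr (.inr ⟨z, h⟩)]
  · rintro (h | ⟨z, h⟩ | ⟨z, h⟩)
    exacts [⟨_, h⟩, ⟨_, h⟩, ⟨_, h⟩]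

end Colors

end BTree

/-- The colors that occur in a node label. -/
def STTLabel.colors {Vl El : Type} : STTLabel Vl El → List ℕ
  | .atom i _ => [i]
  | .add _ i j => [i, j]
  | .forget i => [i]
  | .plus => []

namespace STT

open BTree

variable {Vl El : Type} {k i : ℕ} {τ τ₁ τ₂ : STT Vl El} {γ : El} {p u v : List Bool}

theorem vlabel_eq_some_iff {a : Vl} :
    τ.vlabel u = some a ↔ ∃ i, τ.toTree.labelAt u = some (.atom i a) := by
  induction τ generalizing u with
  | atom j a' => rcases u with _ | ⟨b, u⟩ <;> simp [toTree, labelAt, vlabel]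
  | add _ _ _ τ ih | forget _ τ ih =>
    rcases u with _ | ⟨_ | _, u⟩ <;> simp [toTree, labelAt, vlabel, ih]
  | plus τ₁ τ₂ ih₁ ih₂ =>
    rcases u with _ | ⟨_ | _, u⟩ <;> simp [toTree, labelAt, vlabel, ih₁, ih₂]

theorem mem_vertices_iff :
    u ∈ τ.vertices ↔ ∃ a i, τ.toTree.labelAt u = some (.atom i a) := by
  simp [vertices, Option.isSome_iff_exists, vlabel_eq_some_iff]

theorem vertices_subset_positions (τ : STT Vl El) : τ.vertices ⊆ τ.toTree.positions := by
  intro u hu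
  obtain ⟨a, i, h⟩ := mem_vertices_iff.1 hu
  exact mem_positions_of_labelAt_eq_some h

theorem Valid.mem_Icc_of_mem_colors (hτ : τ.Valid k) {l : STTLabel Vl El}
    (hl : τ.toTree.labelAt p = some l) (hi : i ∈ l.colors) : i ∈ Finset.Icc 1 k := by
  rw [Finset.mem_Icc]
  induction τ generalizing p with
  | atom j a =>
    rcases p with _ | ⟨b, p⟩
    · obtain rfl := Option.some.inj hl
      simp only [STTLabel.colors, List.mem_singleton, Valid] at hi hτ
      omega
    · cases hl
  | add γ j j' τ ih =>
    rcases p with _ | ⟨_ | _, p⟩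
    · obtain rfl := Option.some.inj hl
      simp only [STTLabel.colors, List.mem_cons, List.not_mem_nil, or_false, Valid] at hi hτ
      omega
    · exact ih hτ.2.2.2.2 hl
    · cases hl
  | forget j τ ih =>
    rcases p with _ | ⟨_ | _, p⟩
    · obtain rfl := Option.some.inj hl
      simp only [STTLabel.colors, List.mem_singleton, Valid] at hi hτ
      omega
    · exact ih hτ.2.2 hl
    · cases hl
  | plus τ₁ τ₂ ih₁ ih₂ =>
    rcases p with _ | ⟨_ | _, p⟩
    · obtain rfl := Option.some.inj hl
      cases hi
    · exact ih₁ hτ.1 hl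
    · exact ih₂ hτ.2.1 hl

theorem mem_activeColors_of_chi_isSome (h : (τ.chi i).isSome) : i ∈ τ.activeColors := by
  induction τ with
  | atom j a => simpa [chi, activeColors] using h
  | add _ _ _ τ ih => exact ih (by simpa [chi] using h)
  | forget j τ ih =>
    by_cases hij : i = j
    · simp [chi, hij] at h
    · exact ⟨ih (by simpa [chi, hij] using h), hij⟩
  | plus τ₁ τ₂ ih₁ ih₂ =>
    cases hτ₁ : τ₁.chi i with
    | none => exact .inr (ih₂ (by simpa [chi, hτ₁] using h))
    | some p => exact .inl (ih₁ (by simp [hτ₁]))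

theorem chi_eq_none_of_disjoint (h : Disjoint τ₁.activeColors τ₂.activeColors)
    (hu : τ₁.chi i = some u) : τ₂.chi i = none := by
  by_contra hne
  exact Set.disjoint_left.1 h (mem_activeColors_of_chi_isSome (by simp [hu]))
    (mem_activeColors_of_chi_isSome (Option.isSome_iff_ne_none.2 hne))

theorem Valid.hasColor_nil_iff (hτ : τ.Valid k) :
    τ.toTree.HasColor i [] u ↔ τ.chi i = some u := by
  induction τ generalizing u with
  | atom j a =>
    rcases u with _ | ⟨b, u⟩
    · simp [hasColor_nil_nil, toTree, labelAt, chi, eq_comm]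
    · simp [HasColor, toTree, labelAt, chi]
  | add γ j j' τ ih =>
    rcases u with _ | ⟨_ | _, u⟩
    · simp [hasColor_nil_nil, toTree, labelAt, chi]
    · simp [toTree, (isChild_unary _ _).hasColor_nil_cons, labelAt, chi, ih hτ.2.2.2.2]
    · simp [HasColor, toTree, labelAt, chi]
  | forget j τ ih =>
    rcases u with _ | ⟨_ | _, u⟩
    · simp [hasColor_nil_nil, toTree, labelAt, chi]
    · simp [toTree, (isChild_unary _ _).hasColor_nil_cons, labelAt, chi, ih hτ.2.2, eq_comm]
    · simp [HasColor, toTree, labelAt, chi]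
  | plus τ₁ τ₂ ih₁ ih₂ =>
    obtain ⟨hτ₁, hτ₂, hdisj⟩ := hτ
    rcases u with _ | ⟨_ | _, u⟩
    · cases h₁ : τ₁.chi i <;> simp [hasColor_nil_nil, toTree, labelAt, chi, h₁]
    · cases h₁ : τ₁.chi i <;>
        simp [toTree, (isChild_binary_false _ _ _).hasColor_nil_cons, labelAt, chi, ih₁ hτ₁, h₁]
    · rw [toTree, (isChild_binary_true _ _ _).hasColor_nil_cons, ih₂ hτ₂]
      cases h₁ : τ₁.chi i with
      | none => simp [labelAt, chi, h₁]
      | some p => simp [chi, h₁, chi_eq_none_of_disjoint hdisj h₁]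

theorem Valid.addsEdge_nil_iff {γ' : El} {i j : ℕ} (hτ : (STT.add γ' i j τ).Valid k) :
    (STT.add γ' i j τ).toTree.AddsEdge γ [] u v ↔ γ = γ' ∧ ∃ pu pv,
      τ.chi i = some pu ∧ τ.chi j = some pv ∧ u = false :: pu ∧ v = false :: pv := by
  simp only [AddsEdge, hτ.hasColor_nil_iff]
  simp only [toTree, labelAt, chi, Option.map_eq_some_iff]
  constructor
  · rintro ⟨i, j, ⟨rfl⟩, ⟨pu, hu, rfl⟩, pv, hv, rfl⟩
    exact ⟨rfl, pu, pv, hu, hv, rfl, rfl⟩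
  · rintro ⟨rfl, pu, pv, hu, hv, rfl, rfl⟩
    exact ⟨i, j, rfl, ⟨pu, hu, rfl⟩, pv, hv, rfl⟩

theorem Valid.exists_addsEdge_iff (hτ : τ.Valid k) :
    (∃ z, τ.toTree.AddsEdge γ z u v) ↔ τ.edgeRel γ u v := by
  induction τ generalizing u v with
  | atom i a =>
    rw [BTree.exists_addsEdge_iff]
    simp [AddsEdge, toTree, labelAt, edgeRel]
  | add γ' i j τ ih =>
    rw [BTree.exists_addsEdge_iff, hτ.addsEdge_nil_iff, toTree,
      (isChild_unary _ _).exists_addsEdge_cons]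
    simp only [ih hτ.2.2.2.2, edgeRel]
    simp [AddsEdge, labelAt, or_comm]
  | forget i τ ih =>
    rw [BTree.exists_addsEdge_iff, toTree, (isChild_unary _ _).exists_addsEdge_cons]
    simp only [ih hτ.2.2, edgeRel]
    simp [AddsEdge, labelAt]
  | plus τ₁ τ₂ ih₁ ih₂ =>
    rw [BTree.exists_addsEdge_iff, toTree, (isChild_binary_false _ _ _).exists_addsEdge_cons,
      (isChild_binary_true _ _ _).exists_addsEdge_cons]
    simp only [ih₁ hτ.1, ih₂ hτ.2.1, edgeRel]
    simp [AddsEdge, labelAt]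

/-! ### The interpretation of `G_τ` in the tree of `τ` -/

section Formulas

open GMSO

variable (Vl El) in
/-- `BTree.ColorStep` for the color `i`, from the variable `1` to the variable `2`. -/
def colorStepFormula (i : ℕ) : GMSO (STTLabel Vl El) Bool :=
  (GMSO.lab (.forget i) 1).not.and (.or (.edge false 1 2) (.edge true 1 2))

/-- The formula defining the label `a` of a vertex `x`. -/
noncomputable def labFormula (k : ℕ) (a : Vl) (x : ℕ) : GMSO (STTLabel Vl El) Bool :=
  disj (fun i => .lab (.atom i a) x) (Finset.Icc 1 k).toList

variable {t : BTree (STTLabel Vl El)} {ν : ℕ → Option (List Bool)} {μ : ℕ → Set (List Bool)}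
  {x y z : ℕ}

theorem satUnder_colorStepFormula (h1 : ν 1 = some u) (h2 : ν 2 = some v) (hu : u ∈ t.positions) :
    t.SatUnder ν μ (colorStepFormula Vl El i) ↔ t.ColorStep i u v := by
  simp [colorStepFormula, Sat, h1, h2, hu, ColorStep]

theorem Valid.satUnder_labFormula (hτ : τ.Valid k) {a : Vl} (hx : ν x = some u) :
    τ.toTree.SatUnder ν μ (labFormula k a x) ↔ τ.vlabel u = some a := by
  simp only [labFormula, sat_disj, Sat, hx, vlabel_eq_some_iff]
  constructor
  · rintro ⟨i, -, _, ⟨rfl⟩, -, h⟩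
    exact ⟨i, h⟩
  · rintro ⟨i, h⟩
    exact ⟨i, Finset.mem_toList.2 (hτ.mem_Icc_of_mem_colors h (by simp [STTLabel.colors])), u, rfl,
      mem_positions_of_labelAt_eq_some h, h⟩

variable [Fintype Vl]

variable (Vl El) in
/-- `BTree.HasColor` for the color `i`, with node `z` and vertex `x`. -/
noncomputable def hasColorFormula (i z x : ℕ) : GMSO (STTLabel Vl El) Bool :=
  (disj (fun a : Vl => .lab (.atom i a) x) Finset.univ.toList).and
    (reach (colorStepFormula Vl El i) z x)

variable (Vl) in
/-- The formula defining the `γ`-edges; it binds the variable `0` to the node that adds the edge. -/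
noncomputable def edgeFormula (k : ℕ) (γ : El) (x y : ℕ) : GMSO (STTLabel Vl El) Bool :=
  .exFO 0 (disj (fun i => disj (fun j => (GMSO.lab (.add γ i j) 0).and
    ((hasColorFormula Vl El i 0 x).and (hasColorFormula Vl El j 0 y)))
      (Finset.Icc 1 k).toList) (Finset.Icc 1 k).toList)

theorem freeFO_hasColorFormula_subset (i z x : ℕ) :
    (hasColorFormula Vl El i z x).freeFO ⊆ {z, x} := by
  have hreach : (reach (colorStepFormula Vl El i) z x).freeFO ⊆ {z, x} :=
    freeFO_reach_subset (by simp [colorStepFormula, freeFO, Set.insert_subset_iff]) z x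
  have hlab : ⋃ a ∈ Finset.univ.toList,
      (GMSO.lab (.atom i a) x : GMSO (STTLabel Vl El) Bool).freeFO ⊆ {z, x} :=
    Set.iUnion₂_subset fun a _ => by simp [freeFO]
  simpa only [hasColorFormula, freeFO_and, freeFO_disj] using Set.union_subset hlab hreach

theorem freeSO_hasColorFormula (i z x : ℕ) : (hasColorFormula Vl El i z x).freeSO = ∅ := by
  simp [hasColorFormula, freeSO, freeSO_reach, colorStepFormula]

theorem freeFO_edgeFormula_subset (k : ℕ) (γ : El) (x y : ℕ) :
    (edgeFormula Vl k γ x y).freeFO ⊆ {x, y} := by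
  rintro n ⟨hn, hn0⟩
  simp only [freeFO_disj, freeFO_and, freeFO, Set.mem_iUnion, Set.mem_union] at hn
  obtain ⟨i, -, j, -, h0 | hi | hj⟩ := hn
  · exact absurd h0 hn0
  · exact .inl ((freeFO_hasColorFormula_subset i 0 x hi).resolve_left hn0)
  · exact .inr ((freeFO_hasColorFormula_subset j 0 y hj).resolve_left hn0)

theorem freeSO_edgeFormula (k : ℕ) (γ : El) (x y : ℕ) : (edgeFormula Vl k γ x y).freeSO = ∅ := by
  simp [edgeFormula, freeSO, freeSO_hasColorFormula]

variable (Vl El) in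
/-- The interpretation of `G_τ` in the tree of `τ`, for valid `k`-STTs `τ`. -/
noncomputable def graphInterpretation (k : ℕ) : Interpretation Vl El (STTLabel Vl El) Bool where
  reserved := 3
  vert x := disj (fun a => labFormula k a x) Finset.univ.toList
  lab := labFormula k
  edge := edgeFormula Vl k
  freeFO_vert x := by simp [labFormula, freeFO]
  freeSO_vert x := by simp [labFormula, freeSO]
  freeFO_lab a x := by simp [labFormula, freeFO]
  freeSO_lab a x := by simp [labFormula, freeSO]
  freeFO_edge := freeFO_edgeFormula_subset k
  freeSO_edge := freeSO_edgeFormula k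

theorem satUnder_hasColorFormula (hz : ν z = some p) (hx : ν x = some u) (hp : p ∈ t.positions)
    (hu : u ∈ t.positions) :
    t.SatUnder ν μ (hasColorFormula Vl El i z x) ↔ t.HasColor i p u := by
  have hreach : t.SatUnder ν μ (reach (colorStepFormula Vl El i) z x) ↔
      Relation.ReflTransGen (t.ColorStep i) p u :=
    sat_reach (fun μ v hv w _ => satUnder_colorStepFormula (by simp) (by simp) hv)
      (fun _ _ h => h.mem_positions) hz hx hp
  simp [hasColorFormula, Sat, hx, hu, HasColor, hreach]

theorem Valid.satUnder_edgeFormula (hτ : τ.Valid k) (hx0 : x ≠ 0) (hy0 : y ≠ 0)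
    (hx : ν x = some u) (hy : ν y = some v) (hu : u ∈ τ.toTree.positions)
    (hv : v ∈ τ.toTree.positions) :
    τ.toTree.SatUnder ν μ (edgeFormula Vl k γ x y) ↔ τ.edgeRel γ u v := by
  have hasColor_iff {p w : List Bool} {i x : ℕ} (hp : p ∈ τ.toTree.positions) (hx0 : x ≠ 0)
      (hx : ν x = some w) (hw : w ∈ τ.toTree.positions) :
      τ.toTree.SatUnder (Function.update ν 0 (some p)) μ (hasColorFormula Vl El i 0 x) ↔
        τ.toTree.HasColor i p w :=
    satUnder_hasColorFormula (by simp) (by simpa [hx0] using hx) hp hw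
  simp only [← hτ.exists_addsEdge_iff, AddsEdge, edgeFormula, Sat, sat_disj, sat_and]
  constructor
  · rintro ⟨p, hp, i, -, j, -, ⟨_, ⟨rfl⟩, -, hadd⟩, hi, hj⟩
    exact ⟨p, i, j, hadd, (hasColor_iff hp hx0 hx hu).1 hi, (hasColor_iff hp hy0 hy hv).1 hj⟩
  · rintro ⟨p, i, j, hadd, hi, hj⟩
    have hp := mem_positions_of_labelAt_eq_some hadd
    have color_mem {c : ℕ} (hc : c ∈ [i, j]) : c ∈ (Finset.Icc 1 k).toList :=
      Finset.mem_toList.2 (hτ.mem_Icc_of_mem_colors hadd hc)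
    exact ⟨p, hp, i, color_mem (by simp), j, color_mem (by simp),
      ⟨p, rfl, hp, hadd⟩, (hasColor_iff hp hx0 hx hu).2 hi, (hasColor_iff hp hy0 hy hv).2 hj⟩

theorem Valid.interprets_graphInterpretation (hτ : τ.Valid k) :
    (graphInterpretation Vl El k).Interprets
      τ.toTree.positions (fun p l => τ.toTree.labelAt p = some l) τ.toTree.childRel
      τ.vertices (fun p a => τ.vlabel p = some a) τ.edgeRel where
  subset := τ.vertices_subset_positions
  sat_vert {ν μ x u} _ hx := by
    have hlab (a : Vl) := hτ.satUnder_labFormula (μ := μ) (a := a) hx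
    simp [graphInterpretation, hlab, vertices, Option.isSome_iff_exists]
  sat_lab _ hx _ := hτ.satUnder_labFormula hx
  sat_edge hx3 hy3 hx hy hu hv :=
    hτ.satUnder_edgeFormula (by rintro rfl; cases hx3) (by rintro rfl; cases hy3) hx hy
      (τ.vertices_subset_positions hu) (τ.vertices_subset_positions hv)

end Formulas

end STT

theorem stt_mso_interpretation_general (Vl El : Type) [Finite Vl] (φ : GMSO Vl El)
    (hφ : GMSO.Closed φ) (k : ℕ) :
    ∃ ψ : GMSO (STTLabel Vl El) Bool, GMSO.Closed ψ ∧
      ∀ τ : STT Vl El, τ.Valid k → (τ.graphSat φ ↔ BTree.TSat τ.toTree ψ) := by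
  obtain ⟨_⟩ := nonempty_fintype Vl
  let I := STT.graphInterpretation Vl El k
  exact ⟨I.translate φ, I.closed_translate hφ,
    fun _ hτ => (hτ.interprets_graphInterpretation.models_translate hφ).symm⟩

/-- For every MSO sentence `φ` over `(Vl, El)`-labeled graphs
and every `k > 0`, there is an MSO sentence `φ~^k` over `Λ^k`-labeled binary
trees such that for every valid `k`-STT `τ` (with `⟦τ⟧ = (G,χ)`):
`G ⊨ φ` iff `τ ⊨ φ~^k`. -/
theorem stt_mso_interpretation (Vl El : Type) [Fintype Vl] [Fintype El]
    (φ : GMSO Vl El) (hφ : GMSO.Closed φ) (k : ℕ) (hk : 0 < k) :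
    ∃ ψ : GMSO (STTLabel Vl El) Bool, GMSO.Closed ψ ∧
      ∀ τ : STT Vl El, τ.Valid k →
        (τ.graphSat φ ↔ BTree.TSat τ.toTree ψ) := by
  exact stt_mso_interpretation_general Vl El φ hφ k
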